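/- There exist a division ring F, a division subring G of F, and elements f_0 = 1, f_1, f_2, f_3 forming a left G-basis of F, such that every x ∈ F can be written x = a + f_1·b with a, b ∈ G, and for each k ∈ {1, 2} there exists e ∈ D_k with e ∉ S_k such that every d ∈ D_k can be written d = s + e·t with s, t ∈ S_k. (This corresponds to a division ring extension G ⊆ F for which the (G,F)-bimodule F has right dimension sequence (1,2,2,2,1,4); the associated triangular matrix ring is a hereditary artinian ring of Coxeter type I₂(6).) -/

import Mathlib

/-- The data of a division ring `F`, a division subring `G`, and a sequence
`(f_i)_{i∈ℕ}` of elements of `F` with `f_0 = 1`. -/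
structure DivExtData : Type 1 where
  F : Type
  [instF : DivisionRing F]
  G : Subring F
  hG : ∀ x ∈ G, x⁻¹ ∈ G
  f : ℕ → F
  hf0 : f 0 = 1

attribute [instance] DivExtData.instF

/-- `L_k`: the left `G`-subspace of `F` spanned by `f_0, …, f_k`. -/
def Lset {F : Type*} [DivisionRing F] (G : Subring F) (f : ℕ → F) (k : ℕ) : Set F :=
  {x | ∃ c : ℕ → F, (∀ i, c i ∈ G) ∧ x = ∑ i ∈ Finset.range (k + 1), c i * f i}

/-- `S_k = {a ∈ F : L_k · a ⊆ L_k}`. -/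
def Sset {F : Type*} [DivisionRing F] (G : Subring F) (f : ℕ → F) (k : ℕ) : Set F :=
  {a | ∀ x ∈ Lset G f k, x * a ∈ Lset G f k}

/-- `D_0 = F`, and `D_k = {a ∈ F : L_{k-1} · a ⊆ L_k}` for `k ≥ 1`. -/
def Dset {F : Type*} [DivisionRing F] (G : Subring F) (f : ℕ → F) : ℕ → Set F
  | 0 => Set.univ
  | k + 1 => {a | ∀ x ∈ Lset G f k, x * a ∈ Lset G f (k + 1)}



namespace S8

section Graded
variable {R : Type} [Ring R] (A : ℤ → AddSubgroup R)
  (h1 : (1 : R) ∈ A 0) (hm : ∀ i k a b, a ∈ A i → b ∈ A k → a * b ∈ A (i + k))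

/-- Laurent series whose n-th coefficient lies in `A n`. -/
noncomputable def gsub : Subring (HahnSeries ℤ R) where
  carrier := {s | ∀ n, s.coeff n ∈ A n}
  mul_mem' := by
    intro s t hs ht n
    rw [HahnSeries.coeff_mul]
    refine sum_mem fun ij hij => ?_
    have := hm _ _ _ _ (hs ij.1) (ht ij.2)
    have h2 : ij.1 + ij.2 = n := by simpa using (Finset.mem_antidiagonal.1 hij).2.2
    rwa [h2] at this
  one_mem' := by
    intro n
    rw [HahnSeries.coeff_one]
    split_ifs with h
    · rw [h]; exact h1
    · exact zero_mem _
  add_mem' := by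
    intro s t hs ht n
    rw [HahnSeries.coeff_add]
    exact add_mem (hs n) (ht n)
  zero_mem' := by
    intro n
    exact zero_mem _
  neg_mem' := by
    intro s hs n
    rw [HahnSeries.coeff_neg]
    exact neg_mem (hs n)

theorem gsub_unit (hu : ∀ i a, a ∈ A i → a ≠ 0 → ∃ u : Rˣ, (u : R) = a ∧ ((u⁻¹ : Rˣ) : R) ∈ A (-i))
    (x : gsub A h1 hm) : IsUnit x ∨ x = 0 := by
  by_cases hx : x = 0
  · exact Or.inr hx
  left
  obtain ⟨x, hxA⟩ := x
  have hx0 : x ≠ 0 := fun h => hx (Subtype.ext h)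
  have hc : x.coeff x.order ≠ 0 := by
    have := HahnSeries.leadingCoeff_ne_zero.2 hx0
    rwa [HahnSeries.leadingCoeff_eq] at this
  obtain ⟨u, hua, hui⟩ := hu _ _ (hxA x.order) hc
  set n0 := x.order with hn0
  set p : PowerSeries R := PowerSeries.mk fun n => x.coeff (n0 + n) with hp
  have hxp : HahnSeries.single n0 1 * HahnSeries.ofPowerSeries ℤ R p = x :=
    LaurentSeries.single_order_mul_powerSeriesPart x
  have hpc : PowerSeries.constantCoeff p = u := by
    rw [← PowerSeries.coeff_zero_eq_constantCoeff_apply, hp, PowerSeries.coeff_mk, hua]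
    simp
  set q := p.invOfUnit u with hq
  have hq1 : ∀ n : ℕ, PowerSeries.coeff n q ∈ A (n - n0) := by
    intro n
    induction n using Nat.strong_induction_on with
    | _ n ih =>
      rw [hq, PowerSeries.coeff_invOfUnit]
      split_ifs with h
      · simpa [h] using hui
      · rw [neg_mul]
        apply neg_mem
        have h3 : ∑ x ∈ Finset.HasAntidiagonal.antidiagonal n, (if x.2 < n then
          (PowerSeries.coeff x.1) p * (PowerSeries.coeff x.2) (p.invOfUnit u) else 0) ∈ A n := by
          refine sum_mem fun ij hij => ?_
          split_ifs with h
          · have h4 := ih ij.2 h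
            have h5 : PowerSeries.coeff ij.1 p ∈ A (n0 + ij.1) := by
              rw [hp, PowerSeries.coeff_mk]; exact hxA _
            have h6 := hm _ _ _ _ h5 h4
            have h7 : n0 + (ij.1 : ℤ) + (ij.2 - n0) = n := by
              have := Finset.HasAntidiagonal.mem_antidiagonal.1 hij
              omega
            rwa [h7] at h6
          · exact zero_mem _
        have h8 := hm _ _ _ _ hui h3
        rwa [show -n0 + (n : ℤ) = n - n0 by ring] at h8
  set z : HahnSeries ℤ R := HahnSeries.ofPowerSeries ℤ R q * HahnSeries.single (-n0) 1 with hz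
  have hzA : ∀ n, z.coeff n ∈ A n := by
    intro n
    rw [hz, HahnSeries.coeff_mul_single, mul_one, sub_neg_eq_add]
    by_cases hn : 0 ≤ n + n0
    · obtain ⟨k, hk⟩ := Int.eq_ofNat_of_zero_le hn
      rw [hk, HahnSeries.ofPowerSeries_apply_coeff]
      have := hq1 k
      rwa [show (k : ℤ) - n0 = n by omega] at this
    · rw [HahnSeries.ofPowerSeries_apply, HahnSeries.embDomain_of_notMem_range]
      · exact zero_mem _
      · rintro ⟨k, hk⟩
        simp at hk
        omega
  have hs1 : (HahnSeries.single n0 (1:R)) * HahnSeries.single (-n0) (1:R) = 1 := by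
    rw [HahnSeries.single_mul_single]; simp
  have hs2 : (HahnSeries.single (-n0) (1:R)) * HahnSeries.single (n0) (1:R) = 1 := by
    rw [HahnSeries.single_mul_single]; simp
  have hpq : HahnSeries.ofPowerSeries ℤ R p * HahnSeries.ofPowerSeries ℤ R q = 1 := by
    rw [← map_mul, hq, PowerSeries.mul_invOfUnit p u hpc, map_one]
  have hqp : HahnSeries.ofPowerSeries ℤ R q * HahnSeries.ofPowerSeries ℤ R p = 1 := by
    rw [← map_mul, hq, PowerSeries.invOfUnit_mul p u hpc, map_one]
  have hxz : x * z = 1 := by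
    rw [← hxp, hz, mul_assoc, ← mul_assoc _ _ (HahnSeries.single (-n0) (1:R)), hpq, one_mul, hs1]
  have hzx : z * x = 1 := by
    rw [← hxp, hz, mul_assoc, ← mul_assoc (HahnSeries.single (-n0) (1:R)), hs2, one_mul, hqp]
  exact ⟨⟨⟨x, hxA⟩, ⟨z, hzA⟩, Subtype.ext hxz, Subtype.ext hzx⟩, rfl⟩

/-- scaling the n-th coefficient by `u ^ n`, as a function. -/
noncomputable def psiF (u : Rˣ) (s : HahnSeries ℤ R) : HahnSeries ℤ R :=
  ⟨fun n => ((u ^ n : Rˣ) : R) * s.coeff n, s.isPWO_support.mono (by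
    intro n hn
    rw [HahnSeries.mem_support]
    intro h0
    exact hn (by simp [h0]))⟩

theorem psiF_coeff (u : Rˣ) (s : HahnSeries ℤ R) (n : ℤ) :
    (psiF u s).coeff n = ((u ^ n : Rˣ) : R) * s.coeff n := rfl

theorem psiF_support (u : Rˣ) (s : HahnSeries ℤ R) : (psiF u s).support = s.support := by
  ext n
  rw [HahnSeries.mem_support, HahnSeries.mem_support, psiF_coeff]
  simp

/-- scaling the n-th coefficient by a central `u ^ n`. -/
noncomputable def psiH (u : Rˣ) (hu : ∀ r : R, Commute (u : R) r) :
    HahnSeries ℤ R →+* HahnSeries ℤ R where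
  toFun := psiF u
  map_one' := by
    ext n
    rw [psiF_coeff, HahnSeries.coeff_one]
    split_ifs with h
    · simp [h]
    · simp
  map_zero' := by ext n; simp [psiF_coeff]
  map_add' s t := by ext n; simp [psiF_coeff, mul_add]
  map_mul' s t := by
    ext n
    rw [psiF_coeff, HahnSeries.coeff_mul, HahnSeries.coeff_mul, Finset.mul_sum]
    refine Finset.sum_congr ?_ ?_
    · ext ij
      simp only [Finset.mem_antidiagonal, psiF_support]
    · intro ij hij
      have h2 : ij.1 + ij.2 = n := by simpa using (Finset.mem_antidiagonal.1 hij).2.2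
      rw [psiF_coeff, psiF_coeff, ← h2, zpow_add, Units.val_mul]
      have hc : Commute (((u ^ ij.2 : Rˣ) : R)) (s.coeff ij.1) :=
        Commute.units_zpow_left (hu _) _
      rw [mul_assoc, mul_assoc, ← mul_assoc _ (s.coeff _), hc.eq, mul_assoc]

theorem psiH_coeff (u : Rˣ) (hu : ∀ r : R, Commute (u : R) r) (s : HahnSeries ℤ R) (n : ℤ) :
    (psiH u hu s).coeff n = ((u ^ n : Rˣ) : R) * s.coeff n := rfl

end Graded

section Skew
variable {F : Type} [DivisionRing F] (c : F ≃+* F)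

/-- left multiplication -/
noncomputable def lm (a : F) : AddMonoid.End F := AddMonoidHom.mulLeft a

theorem lm_apply (a x : F) : lm a x = a * x := rfl

/-- the automorphism as a unit of the endomorphism ring -/
noncomputable def cu : (AddMonoid.End F)ˣ where
  val := (c : F →+* F).toAddMonoidHom
  inv := (c.symm : F →+* F).toAddMonoidHom
  val_inv := by ext x; exact c.apply_symm_apply x
  inv_val := by ext x; exact c.symm_apply_apply x

theorem cu_lm (a : F) : (cu c : AddMonoid.End F) * lm a = lm (c a) * (cu c : AddMonoid.End F) := by
  ext x; exact map_mul c a x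

theorem cui_lm (a : F) : ((cu c)⁻¹ : (AddMonoid.End F)ˣ) * lm a
    = lm (c.symm a) * (((cu c)⁻¹ : (AddMonoid.End F)ˣ) : AddMonoid.End F) := by
  ext x; exact map_mul c.symm a x

theorem lm_mul (a b : F) : lm (a * b) = lm a * lm b := by
  ext x; exact mul_assoc a b x

theorem lm_one : lm (1 : F) = 1 := by
  ext x; exact one_mul x

theorem cuz_lm (n : ℤ) : ∀ a : F, ∃ b : F,
    ((cu c ^ n : (AddMonoid.End F)ˣ) : AddMonoid.End F) * lm a
      = lm b * ((cu c ^ n : (AddMonoid.End F)ˣ) : AddMonoid.End F) := by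
  induction n using Int.induction_on with
  | zero => intro a; exact ⟨a, by simp⟩
  | succ n ih =>
    intro a
    obtain ⟨b, hb⟩ := ih (c a)
    refine ⟨b, ?_⟩
    rw [zpow_add_one, Units.val_mul, mul_assoc, cu_lm, ← mul_assoc, hb, mul_assoc]
  | pred n ih =>
    intro a
    obtain ⟨b, hb⟩ := ih (c.symm a)
    refine ⟨b, ?_⟩
    rw [zpow_sub_one, Units.val_mul, mul_assoc, cui_lm, ← mul_assoc, hb, mul_assoc]

/-- the homogeneous part -/
noncomputable def gA (n : ℤ) : AddSubgroup (AddMonoid.End F) where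
  carrier := {r | ∃ a : F, r = lm a * ((cu c ^ n : (AddMonoid.End F)ˣ) : AddMonoid.End F)}
  add_mem' := by
    rintro _ _ ⟨a, rfl⟩ ⟨b, rfl⟩
    refine ⟨a + b, ?_⟩
    rw [← add_mul]
    congr 1
    ext x; exact (add_mul a b x).symm
  zero_mem' := ⟨0, by
    ext x
    exact (zero_mul _).symm⟩
  neg_mem' := by
    rintro _ ⟨a, rfl⟩
    refine ⟨-a, ?_⟩
    ext x
    exact (neg_mul _ _).symm

theorem gA_one : (1 : AddMonoid.End F) ∈ gA c 0 := ⟨1, by simp [lm_one]⟩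

theorem gA_mul (i k : ℤ) (r s : AddMonoid.End F) (hr : r ∈ gA c i) (hs : s ∈ gA c k) :
    r * s ∈ gA c (i + k) := by
  obtain ⟨a, rfl⟩ := hr
  obtain ⟨b, rfl⟩ := hs
  obtain ⟨bb, hb⟩ := cuz_lm c i b
  refine ⟨a * bb, ?_⟩
  rw [zpow_add, Units.val_mul, lm_mul, mul_assoc, ← mul_assoc _ (lm b), hb]
  simp only [mul_assoc]

theorem gA_unit (i : ℤ) (r : AddMonoid.End F) (hr : r ∈ gA c i) (h0 : r ≠ 0) :
    ∃ u : (AddMonoid.End F)ˣ, (u : AddMonoid.End F) = r ∧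
      ((u⁻¹ : (AddMonoid.End F)ˣ) : AddMonoid.End F) ∈ gA c (-i) := by
  obtain ⟨a, rfl⟩ := hr
  have ha : a ≠ 0 := by
    rintro rfl
    apply h0
    ext x
    exact zero_mul _
  let v : (AddMonoid.End F)ˣ := ⟨lm a, lm a⁻¹, by rw [← lm_mul, mul_inv_cancel₀ ha, lm_one],
    by rw [← lm_mul, inv_mul_cancel₀ ha, lm_one]⟩
  refine ⟨v * cu c ^ i, rfl, ?_⟩
  rw [mul_inv_rev, ← zpow_neg, Units.val_mul]
  exact cuz_lm c (-i) a⁻¹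

theorem lm_ne (a : F) (h : lm a = 0) : a = 0 := by
  have := DFunLike.congr_fun h 1
  simpa [lm_apply] using this

theorem skew_exists (h5 : (5 : F) = 0) :
    ∃ (E : Type) (_ : DivisionRing E) (j : F →+* E) (y : E) (ψ : E →+* E),
      y ≠ 0 ∧ y ^ 4 ≠ 1 ∧ (∀ x, y * j x = j (c x) * y) ∧ (∀ x, ψ (j x) = j x) ∧
      ψ y = 2 * y ∧ ∀ e, ψ (ψ (ψ (ψ e))) = e := by
  let S := gsub (gA c) (gA_one c) (gA_mul c)
  have h5R : (5 : AddMonoid.End F) = 0 := by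
    ext x
    have : (5 : AddMonoid.End F) x = 5 * x := by
      change ((5 : ℕ) : AddMonoid.End F) x = _
      rw [AddMonoid.End.natCast_apply]; simp
    rw [this, h5, zero_mul]; rfl
  have h6 : (2 : AddMonoid.End F) * 3 = 1 := by
    have : (2 : AddMonoid.End F) * 3 = 5 + 1 := by norm_num
    rw [this, h5R, zero_add]
  have h62 : (3 : AddMonoid.End F) * 2 = 1 := by
    have : (3 : AddMonoid.End F) * 2 = 5 + 1 := by norm_num
    rw [this, h5R, zero_add]
  let u : (AddMonoid.End F)ˣ := ⟨2, 3, h6, h62⟩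
  have hu : ∀ r : AddMonoid.End F, Commute (u : AddMonoid.End F) r := fun r =>
    Nat.cast_commute 2 r
  have hu4 : u ^ 4 = 1 := by
    ext1
    rw [Units.val_pow_eq_pow_val, Units.val_one]
    change (2 : AddMonoid.End F) ^ 4 = 1
    have : (2 : AddMonoid.End F) ^ 4 = 3 * 5 + 1 := by norm_num
    rw [this, h5R, mul_zero, zero_add]
  have : Nontrivial (HahnSeries ℤ (AddMonoid.End F)) := by
    have : Nontrivial (AddMonoid.End F) := ⟨⟨1, 0, fun h => one_ne_zero (lm_ne (1 : F) (by rw [lm_one, h]))⟩⟩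
    infer_instance
  let : DivisionRing S := DivisionRing.ofIsUnitOrEqZero (gsub_unit _ _ _ (gA_unit c))
  have hA2 : ∀ n : ℤ, ∀ r ∈ gA c n, (((u ^ n : (AddMonoid.End F)ˣ)) : AddMonoid.End F) * r ∈ gA c n := by
    intro n r hr
    obtain ⟨a, rfl⟩ := hr
    have h2 : lm (2 : F) = 2 := by
      ext x
      have : (2 : AddMonoid.End F) x = 2 * x := by
        change ((2 : ℕ) : AddMonoid.End F) x = _
        rw [AddMonoid.End.natCast_apply]; simp
      rw [this]; rfl
    have h3 : lm (3 : F) = 3 := by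
      ext x
      have : (3 : AddMonoid.End F) x = 3 * x := by
        change ((3 : ℕ) : AddMonoid.End F) x = _
        rw [AddMonoid.End.natCast_apply]; simp
      rw [this]; rfl
    have key : ∃ b : F, ((u ^ n : (AddMonoid.End F)ˣ) : AddMonoid.End F) = lm b := by
      induction n using Int.induction_on with
      | zero => exact ⟨1, by simp [lm_one]⟩
      | succ n ih =>
        obtain ⟨b, hb⟩ := ih
        exact ⟨b * 2, by rw [zpow_add_one, Units.val_mul, hb, lm_mul, h2]⟩
      | pred n ih =>
        obtain ⟨b, hb⟩ := ih
        exact ⟨b * 3, by rw [zpow_sub_one, Units.val_mul, hb, lm_mul, h3]; rfl⟩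
    obtain ⟨b, hb⟩ := key
    exact ⟨b * a, by rw [hb, lm_mul, mul_assoc]⟩
  let ψ : S →+* S := (psiH u hu).restrict S S (fun s hs n => hA2 n _ (hs n))
  have hjm : ∀ a : F, HahnSeries.single (0 : ℤ) (lm a) ∈ S := by
    intro a n
    rw [HahnSeries.coeff_single]
    split_ifs with h
    · rw [h]; exact ⟨a, by simp⟩
    · exact zero_mem _
  have hym : HahnSeries.single (1 : ℤ) (cu c : AddMonoid.End F) ∈ S := by
    intro n
    rw [HahnSeries.coeff_single]
    split_ifs with h
    · rw [h]; exact ⟨1, by simp [lm_one]⟩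
    · exact zero_mem _
  let j : F →+* S :=
    { toFun := fun a => ⟨_, hjm a⟩
      map_one' := by
        apply Subtype.ext
        change HahnSeries.single (0 : ℤ) (lm (1:F)) = 1
        rw [lm_one]; rfl
      map_zero' := by
        apply Subtype.ext
        change HahnSeries.single (0 : ℤ) (lm (0:F)) = 0
        have : lm (0 : F) = 0 := by ext x; exact zero_mul x
        rw [this]; simp
      map_mul' := by
        intro a b
        apply Subtype.ext
        change HahnSeries.single (0 : ℤ) (lm (a * b)) = HahnSeries.single (0 : ℤ) (lm a) * HahnSeries.single (0 : ℤ) (lm b)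
        rw [HahnSeries.single_mul_single, lm_mul, add_zero]
      map_add' := by
        intro a b
        apply Subtype.ext
        change HahnSeries.single (0 : ℤ) (lm (a + b)) = HahnSeries.single (0 : ℤ) (lm a) + HahnSeries.single (0 : ℤ) (lm b)
        have hl : lm (a + b) = lm a + lm b := by ext x; exact add_mul a b x
        rw [hl]
        exact map_add (HahnSeries.single.addMonoidHom (0 : ℤ)) (lm a) (lm b) }
  let y : S := ⟨_, hym⟩
  refine ⟨S, inferInstance, j, y, ψ, ?_, ?_, ?_, ?_, ?_, ?_⟩
  · intro h
    have h1 := congrArg (fun s : S => s.1.coeff 1 1) h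
    have h2 : (HahnSeries.single (1 : ℤ) (cu c : AddMonoid.End F)).coeff 1 1 = (0 : F) := h1
    rw [HahnSeries.coeff_single_same] at h2
    exact one_ne_zero ((map_one c).symm.trans h2)
  · intro h
    have h1 : (y ^ 4).1 = HahnSeries.single (4 : ℤ) ((cu c : AddMonoid.End F) ^ 4) := by
      change (HahnSeries.single (1 : ℤ) (cu c : AddMonoid.End F)) ^ 4 = _
      simp [pow_succ, HahnSeries.single_mul_single]
    rw [h] at h1
    have h2 := congrArg (fun s => s.coeff 0 1) h1
    have h3 : (1 : HahnSeries ℤ (AddMonoid.End F)).coeff 0 1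
      = (HahnSeries.single (4 : ℤ) ((cu c : AddMonoid.End F) ^ 4)).coeff 0 1 := h2
    rw [HahnSeries.coeff_single_of_ne (by norm_num), HahnSeries.coeff_one, if_pos rfl] at h3
    exact one_ne_zero (show (1 : F) = 0 from h3)
  · intro x
    apply Subtype.ext
    change HahnSeries.single (1 : ℤ) (cu c : AddMonoid.End F) * HahnSeries.single (0 : ℤ) (lm x)
      = HahnSeries.single (0 : ℤ) (lm (c x)) * HahnSeries.single (1 : ℤ) (cu c : AddMonoid.End F)
    rw [HahnSeries.single_mul_single, HahnSeries.single_mul_single, cu_lm, add_zero, zero_add]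
  · intro x
    apply Subtype.ext
    change psiH u hu (HahnSeries.single (0 : ℤ) (lm x)) = HahnSeries.single (0 : ℤ) (lm x)
    ext1; funext n
    rw [psiH_coeff, HahnSeries.coeff_single]
    split_ifs with h
    · simp [h]
    · simp
  · apply Subtype.ext
    change psiH u hu (HahnSeries.single (1 : ℤ) (cu c : AddMonoid.End F))
      = 2 * HahnSeries.single (1 : ℤ) (cu c : AddMonoid.End F)
    ext1; funext n
    rw [psiH_coeff, two_mul, HahnSeries.coeff_add, HahnSeries.coeff_single]
    split_ifs with h
    · rw [h, zpow_one, ← two_mul]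
    · simp
  · rintro ⟨e, he⟩
    apply Subtype.ext
    change psiH u hu (psiH u hu (psiH u hu (psiH u hu e))) = e
    ext1; funext n
    simp only [psiH_coeff, ← mul_assoc, ← Units.val_mul]
    have : u ^ n * u ^ n * u ^ n * u ^ n = 1 := by
      have h4 : u ^ n * u ^ n * u ^ n * u ^ n = (u ^ 4) ^ n := by
        rw [← zpow_natCast, ← zpow_mul, ← zpow_add, ← zpow_add, ← zpow_add]
        congr 1; push_cast; ring
      rw [h4, hu4, one_zpow]
    rw [this]; simp

end Skew
end S8


namespace S8


section Tr
variable {F : Type} [DivisionRing F]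

/-- the trace of an endomorphism of order four -/
def tr (c : F →+* F) (x : F) : F := x + c x + c (c x) + c (c (c x))

variable (c : F →+* F)

theorem tr_add (x z : F) : tr c (x + z) = tr c x + tr c z := by
  simp only [tr, map_add]; abel

theorem tr_sub (x z : F) : tr c (x - z) = tr c x - tr c z := by
  simp only [tr, map_sub]; abel

theorem tr_fix (hc4 : ∀ x, c (c (c (c x))) = x) (x : F) : c (tr c x) = tr c x := by
  simp only [tr, map_add, hc4]; abel

theorem tr_mul_left (g x : F) (hg : c g = g) : tr c (g * x) = g * tr c x := by
  simp only [tr, map_mul, hg, mul_add]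

theorem tr_mul_right (g x : F) (hg : c g = g) : tr c (x * g) = tr c x * g := by
  simp only [tr, map_mul, hg, add_mul]

end Tr

/-- One stage of the construction. -/
structure Stage : Type 1 where
  F : Type
  [inst : DivisionRing F]
  h5 : (5 : F) = 0
  c : F →+* F
  hc4 : ∀ x, c (c (c (c x))) = x
  f : F
  κ : ℕ → F
  hκ : ∀ i < 4, ∀ l < 4, tr c (f ^ i * κ l) = if i = l then 1 else 0

attribute [instance] Stage.inst

namespace Stage
variable (s : Stage)

/-- coordinates -/
def T (l : ℕ) (x : s.F) : s.F := tr s.c (x * s.κ l)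

theorem T_fix (l : ℕ) (x : s.F) : s.c (s.T l x) = s.T l x := tr_fix _ s.hc4 _

theorem T_pow (i l : ℕ) (hi : i < 4) (hl : l < 4) : s.T l (s.f ^ i) = if i = l then 1 else 0 :=
  s.hκ i hi l hl

theorem T_add (l : ℕ) (x z : s.F) : s.T l (x + z) = s.T l x + s.T l z := by
  rw [T, add_mul, tr_add]; rfl

theorem T_sub (l : ℕ) (x z : s.F) : s.T l (x - z) = s.T l x - s.T l z := by
  rw [T, sub_mul, tr_sub]; rfl

theorem T_smul (l : ℕ) (g x : s.F) (hg : s.c g = g) : s.T l (g * x) = g * s.T l x := by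
  rw [T, mul_assoc, tr_mul_left _ _ _ hg]; rfl

theorem indep (g : ℕ → s.F) (hg : ∀ i, s.c (g i) = g i)
    (h : ∑ i ∈ Finset.range 4, g i * s.f ^ i = 0) : ∀ i < 4, g i = 0 := by
  intro l hl
  have h1 : s.T l (∑ i ∈ Finset.range 4, g i * s.f ^ i) = g l := by
    simp only [Finset.sum_range_succ, Finset.range_zero, Finset.sum_empty, zero_add, T_add]
    rw [T_smul _ _ _ _ (hg _), T_smul _ _ _ _ (hg _), T_smul _ _ _ _ (hg _),
      T_smul _ _ _ _ (hg _), T_pow _ _ _ (by norm_num) hl, T_pow _ _ _ (by norm_num) hl,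
      T_pow _ _ _ (by norm_num) hl, T_pow _ _ _ (by norm_num) hl]
    interval_cases l <;> simp
  rw [← h1, h, T, zero_mul]
  simp [tr]

theorem span (x : s.F) : x = ∑ i ∈ Finset.range 4, s.T i x * s.f ^ i := by
  let K : Matrix (Fin 4) (Fin 4) s.F := fun i m => s.c^[m] (s.f ^ (i : ℕ))
  let M : Matrix (Fin 4) (Fin 4) s.F := fun m l => s.c^[m] (s.κ l)
  have hKM : K * M = 1 := by
    ext i l
    rw [Matrix.mul_apply, Matrix.one_apply]
    have h := s.hκ i i.2 l l.2
    simp only [Fin.val_inj] at h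
    rw [← h]
    simp [K, M, Fin.sum_univ_four, tr, map_mul]
  have hMK : M * K = 1 := mul_eq_one_comm.1 hKM
  have e : ∀ m : Fin 4, ∑ l : Fin 4, s.c^[m] (s.κ l) * s.f ^ (l : ℕ) = if m = 0 then 1 else 0 := by
    intro m
    have := congrFun (congrFun hMK m) 0
    rw [Matrix.mul_apply, Matrix.one_apply] at this
    simpa [K, M] using this
  have e0 := e 0
  have e1 := e 1
  have e2 := e 2
  have e3 := e 3
  simp [Fin.sum_univ_four] at e0 e1 e2 e3
  simp only [Finset.sum_range_succ, Finset.range_zero, Finset.sum_empty, zero_add, T, tr, map_mul]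
  calc x = x * 1 + s.c x * 0 + s.c (s.c x) * 0 + s.c (s.c (s.c x)) * 0 := by simp
    _ = _ := by
      rw [← e0]
      nth_rewrite 1 [← e1]
      nth_rewrite 1 [← e2]
      rw [← e3]
      simp only [pow_zero, pow_one, mul_one]
      noncomm_ring

/-- the left subspace -/
def InL (k : ℕ) (x : s.F) : Prop := ∃ g : ℕ → s.F, (∀ i, s.c (g i) = g i) ∧
  x = ∑ i ∈ Finset.range (k + 1), g i * s.f ^ i

theorem inL1 (x : s.F) (h2 : s.T 2 x = 0) (h3 : s.T 3 x = 0) : s.InL 1 x := by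
  refine ⟨fun i => s.T i x, fun i => s.T_fix i x, ?_⟩
  conv_lhs => rw [s.span x]
  rw [Finset.sum_range_succ, Finset.sum_range_succ, h2, h3]
  simp

theorem inL2 (x : s.F) (h3 : s.T 3 x = 0) : s.InL 2 x := by
  refine ⟨fun i => s.T i x, fun i => s.T_fix i x, ?_⟩
  conv_lhs => rw [s.span x]
  rw [Finset.sum_range_succ, h3]
  simp

theorem kap_ne (i : ℕ) (hi : i < 4) : s.κ i ≠ 0 := by
  intro h
  have := s.hκ i hi i hi
  rw [h] at this
  simp [tr] at this

theorem P5 (d : s.F) : ∃ t : s.F, s.InL 2 t ∧ s.InL 2 (s.f * t) ∧ s.InL 2 (s.f ^ 2 * t) ∧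
    s.InL 2 (s.f ^ 3 * t - s.f ^ 2 * d) := by
  set q := s.T 3 (s.f ^ 2 * d) with hq
  have hqf : s.c q = q := s.T_fix _ _
  have hk := s.kap_ne 3 (by norm_num)
  have key : ∀ i < 4, s.T 3 (s.f ^ i * (s.κ 3 * q * (s.κ 3)⁻¹)) = (if i = 3 then 1 else 0) * q := by
    intro i hi
    rw [T, ← s.hκ i hi 3 (by norm_num), ← tr_mul_right _ _ _ hqf]
    congr 1
    simp only [mul_assoc, inv_mul_cancel₀ hk, mul_one]
  refine ⟨s.κ 3 * q * (s.κ 3)⁻¹, s.inL2 _ ?_, s.inL2 _ ?_, s.inL2 _ ?_, s.inL2 _ ?_⟩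
  · simpa using key 0 (by norm_num)
  · simpa using key 1 (by norm_num)
  · simpa using key 2 (by norm_num)
  · rw [T_sub, ← hq, key 3 (by norm_num)]; simp

end Stage


section Next

/-- all the facts about the skew Laurent extension that are used -/
structure Ext (F : Type) [DivisionRing F] (c : F →+* F) (E : Type) [DivisionRing E] where
  j : F →+* E
  y : E
  ψ : E →+* E
  h5 : (5 : E) = 0
  hc4 : ∀ x, c (c (c (c x))) = x
  y0 : y ≠ 0
  y4 : y ^ 4 ≠ 1
  hy : ∀ x, y * j x = j (c x) * y
  ψj : ∀ x, ψ (j x) = j x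
  ψy : ψ y = 2 * y
  ψ4 : ∀ e, ψ (ψ (ψ (ψ e))) = e

namespace Ext
variable {F : Type} [DivisionRing F] {c : F →+* F} {E : Type} [DivisionRing E] (X : Ext F c E)

/-- one plus y -/
def h : E := 1 + X.y
/-- one minus the fourth power of y -/
def N : E := 1 - X.y ^ 4
/-- N over h -/
def P : E := 1 - X.y + X.y ^ 2 - X.y ^ 3
/-- the inverse cube times P -/
def Q : E := X.y⁻¹ ^ 3 * X.P
/-- the weight -/
def w : E := X.N * X.Q

theorem N0 : X.N ≠ 0 := sub_ne_zero.2 (Ne.symm X.y4)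

theorem hP : X.h * X.P = X.N := by
  simp only [h, P, N]; noncomm_ring

theorem Ph : X.P * X.h = X.N := by
  simp only [h, P, N]; noncomm_ring

theorem h0 : X.h ≠ 0 := by
  intro h
  have := X.hP
  rw [h, zero_mul] at this
  exact X.N0 this.symm

theorem y4j (x : F) : X.y ^ 4 * X.j x = X.j x * X.y ^ 4 := by
  have hs : ∀ x, SemiconjBy X.y (X.j x) (X.j (c x)) := X.hy
  have h4 := (hs (c (c (c x)))).mul_left ((hs (c (c x))).mul_left ((hs (c x)).mul_left (hs x)))
  rw [X.hc4] at h4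
  have e : X.y ^ 4 = X.y * (X.y * (X.y * X.y)) := by noncomm_ring
  rw [e]
  exact h4

theorem Nj (x : F) : Commute X.N (X.j x) := by
  rw [Commute, SemiconjBy, N, sub_mul, mul_sub, X.y4j, one_mul, mul_one]

theorem Ny : Commute X.N X.y := by
  rw [Commute, SemiconjBy, N]; noncomm_ring

theorem hinv : X.h⁻¹ = X.N⁻¹ * X.P := by
  rw [eq_comm]
  apply eq_inv_of_mul_eq_one_left
  rw [mul_assoc, X.Ph, inv_mul_cancel₀ X.N0]

theorem hyc : Commute X.h X.y := by
  rw [Commute, SemiconjBy, h]; noncomm_ring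

theorem yP : Commute X.y X.P := by
  rw [Commute, SemiconjBy, P]; noncomm_ring

theorem hw : X.h * X.w = X.N ^ 2 * X.y⁻¹ ^ 3 := by
  have h1 : Commute X.h X.N := by
    rw [Commute, SemiconjBy, h, N]; noncomm_ring
  have h2 : Commute X.h (X.y⁻¹ ^ 3) := (X.hyc.inv_right₀).pow_right 3
  have h3 : Commute X.N (X.y⁻¹ ^ 3) := (X.Ny.inv_right₀).pow_right 3
  rw [w, Q, ← mul_assoc, h1.eq, mul_assoc, ← mul_assoc X.h, h2.eq, mul_assoc, X.hP, ← h3.eq,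
    pow_two, mul_assoc]

/-- the twisted automorphism -/
def ct : E →+* E where
  toFun e := X.h * X.ψ (X.h⁻¹ * e * X.h) * X.h⁻¹
  map_one' := by simp [X.h0]
  map_zero' := by simp
  map_add' a b := by simp only [mul_add, add_mul, map_add]
  map_mul' a b := by
    have h1 : X.h⁻¹ * (a * b) * X.h = (X.h⁻¹ * a * X.h) * (X.h⁻¹ * b * X.h) := by
      simp only [mul_assoc, mul_inv_cancel_left₀ X.h0]
    rw [h1, map_mul]
    simp only [mul_assoc, inv_mul_cancel_left₀ X.h0]

theorem ct_apply (e : E) : X.ct e = X.h * X.ψ (X.h⁻¹ * e * X.h) * X.h⁻¹ := rfl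

theorem ct_conj (e : E) : X.ct (X.h * e * X.h⁻¹) = X.h * X.ψ e * X.h⁻¹ := by
  rw [ct_apply]
  simp only [mul_assoc, inv_mul_cancel₀ X.h0, mul_one, inv_mul_cancel_left₀ X.h0]

theorem ct_four (e : E) : X.ct (X.ct (X.ct (X.ct e))) = e := by
  rw [X.ct_apply e, ct_conj, ct_conj, ct_conj, X.ψ4]
  simp only [mul_assoc, mul_inv_cancel₀ X.h0, mul_one, mul_inv_cancel_left₀ X.h0]

theorem tr_conj (e : E) : tr X.ct (X.h * e * X.h⁻¹) = X.h * tr X.ψ e * X.h⁻¹ := by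
  simp only [tr, ct_conj, mul_add, add_mul]

theorem tr_ct (e : E) : tr X.ct (e * X.h⁻¹) = X.h * tr X.ψ (X.h⁻¹ * e) * X.h⁻¹ := by
  rw [← tr_conj, mul_inv_cancel_left₀ X.h0]

theorem ct_hj (a : F) : X.ct (X.h * X.j a * X.h⁻¹) = X.h * X.j a * X.h⁻¹ := by
  rw [ct_conj, X.ψj]

theorem fix_y (g : F) (hg : c g = g) : Commute X.y (X.j g) := by
  rw [Commute, SemiconjBy, X.hy, hg]

theorem fix_h (g : F) (hg : c g = g) : Commute X.h (X.j g) :=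
  (Commute.one_left _).add_left (X.fix_y g hg)

theorem fix_P (g : F) (hg : c g = g) : Commute X.P (X.j g) := by
  have h := X.fix_y g hg
  exact (((Commute.one_left _).sub_left h).add_left (h.pow_left 2)).sub_left (h.pow_left 3)

theorem fix_w (g : F) (hg : c g = g) : Commute X.w (X.j g) := by
  have h := X.fix_y g hg
  exact (X.Nj g).mul_left ((h.inv_left₀.pow_left 3).mul_left (X.fix_P g hg))

theorem ct_fix (g : F) (hg : c g = g) : X.ct (X.j g) = X.j g := by
  have := X.ct_hj g
  rwa [(X.fix_h g hg).eq, mul_assoc, mul_inv_cancel₀ X.h0, mul_one] at this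

theorem tr_nat (v : E) (n : ℕ) (hv : X.ψ v = n * v) :
    tr X.ψ v = ((1 + n + n ^ 2 + n ^ 3 : ℕ) : E) * v := by
  simp only [tr, hv, map_mul, map_natCast]
  push_cast
  noncomm_ring

theorem tr_nat0 (v : E) (n k : ℕ) (hv : X.ψ v = n * v) (hk : 1 + n + n ^ 2 + n ^ 3 = 5 * k) :
    tr X.ψ v = 0 := by
  rw [X.tr_nat v n hv, hk]
  push_cast
  rw [X.h5]; simp

theorem ψY : X.ψ X.y⁻¹ = 3 * X.y⁻¹ := by
  rw [map_inv₀, X.ψy]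
  apply inv_eq_of_mul_eq_one_right
  have h : (2 : E) * X.y * (3 * X.y⁻¹) = (2 * 3) * (X.y * X.y⁻¹) := by noncomm_ring
  have h6 : (2 : E) * 3 = 1 := by
    have : (2 : E) * 3 = 5 + 1 := by norm_num
    rw [this, X.h5, zero_add]
  rw [h, mul_inv_cancel₀ X.y0, h6, one_mul]

theorem tr_y : tr X.ψ X.y = 0 :=
  X.tr_nat0 _ 2 3 (by rw [X.ψy]; rfl) (by norm_num)

theorem tr_y2 : tr X.ψ (X.y ^ 2) = 0 :=
  X.tr_nat0 _ 4 17 (by rw [map_pow, X.ψy]; push_cast; noncomm_ring) (by norm_num)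

theorem tr_y3 : tr X.ψ (X.y ^ 3) = 0 :=
  X.tr_nat0 _ 8 117 (by rw [map_pow, X.ψy]; push_cast; noncomm_ring) (by norm_num)

theorem tr_Y : tr X.ψ (X.y⁻¹) = 0 :=
  X.tr_nat0 _ 3 8 (by rw [X.ψY]; rfl) (by norm_num)

theorem tr_Y2 : tr X.ψ (X.y⁻¹ ^ 2) = 0 :=
  X.tr_nat0 _ 9 164 (by rw [map_pow, X.ψY]; push_cast; noncomm_ring) (by norm_num)

theorem tr_Y3 : tr X.ψ (X.y⁻¹ ^ 3) = 0 :=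
  X.tr_nat0 _ 27 4088 (by rw [map_pow, X.ψY]; push_cast; noncomm_ring) (by norm_num)

theorem tr_one : tr X.ψ 1 = -1 := by
  have : tr X.ψ 1 = 5 - 1 := by simp only [tr, map_one]; norm_num
  rw [this, X.h5, zero_sub]

theorem Q_eq : X.Q = X.y⁻¹ ^ 3 - X.y⁻¹ ^ 2 + X.y⁻¹ - 1 := by
  have h := inv_mul_cancel₀ X.y0
  simp only [Q, P, pow_succ, pow_zero, one_mul, mul_add, mul_sub, mul_one, mul_assoc, h,
    inv_mul_cancel_left₀ X.y0]

theorem yQ : X.y * X.Q = X.y⁻¹ ^ 2 - X.y⁻¹ + 1 - X.y := by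
  have h := mul_inv_cancel₀ X.y0
  simp only [Q_eq, pow_succ, pow_zero, one_mul, mul_add, mul_sub, mul_one, h,
    mul_inv_cancel_left₀ X.y0, ← mul_assoc]

theorem y2Q : X.y ^ 2 * X.Q = X.y⁻¹ - 1 + X.y - X.y ^ 2 := by
  have h := mul_inv_cancel₀ X.y0
  rw [pow_two, mul_assoc, yQ]
  simp only [pow_succ, pow_zero, one_mul, mul_add, mul_sub, mul_one, h, ← mul_assoc]

theorem y3Q : X.y ^ 3 * X.Q = 1 - X.y + X.y ^ 2 - X.y ^ 3 := by
  have h := mul_inv_cancel₀ X.y0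
  rw [pow_succ', mul_assoc, y2Q]
  simp only [pow_succ, pow_zero, one_mul, mul_add, mul_sub, mul_one, h]

theorem trQ : tr X.ψ X.Q = 1 := by
  rw [Q_eq, tr_sub, tr_add, tr_sub, tr_Y, tr_Y2, tr_Y3, tr_one]; simp

theorem tryQ : tr X.ψ (X.y * X.Q) = -1 := by
  rw [yQ, tr_sub, tr_add, tr_sub, tr_Y, tr_Y2, tr_y, tr_one]; simp

theorem try2Q : tr X.ψ (X.y ^ 2 * X.Q) = 1 := by
  rw [y2Q, tr_sub, tr_add, tr_sub, tr_Y, tr_y2, tr_y, tr_one]; simp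

theorem try3Q : tr X.ψ (X.y ^ 3 * X.Q) = -1 := by
  rw [y3Q, tr_sub, tr_add, tr_sub, tr_y3, tr_y2, tr_y, tr_one]; simp

theorem Pj (x : F) : X.P * X.j x = X.j x - X.j (c x) * X.y + X.j (c (c x)) * X.y ^ 2
    - X.j (c (c (c x))) * X.y ^ 3 := by
  have h2 : X.y ^ 2 * X.j x = X.j (c (c x)) * X.y ^ 2 := by
    rw [pow_two, mul_assoc, X.hy, ← mul_assoc, X.hy, mul_assoc]
  have h3 : X.y ^ 3 * X.j x = X.j (c (c (c x))) * X.y ^ 3 := by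
    rw [pow_succ', mul_assoc, h2, ← mul_assoc, X.hy, mul_assoc]
  simp only [P, sub_mul, add_mul, one_mul, h2, h3, X.hy]

theorem hxw (x : F) : X.h⁻¹ * (X.j x * X.w) = X.P * X.j x * X.Q := by
  have h1 : Commute X.N (X.P * X.j x) := by
    refine Commute.mul_right ?_ (X.Nj x)
    rw [Commute, SemiconjBy, N, P]; noncomm_ring
  rw [X.hinv, w, ← mul_assoc (X.j x), ← (X.Nj x).eq, mul_assoc X.N⁻¹, ← mul_assoc X.P,
    ← mul_assoc X.P, ]
  have h2 : X.P * X.N = X.N * X.P := by rw [N, P]; noncomm_ring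
  rw [h2, mul_assoc X.N, mul_assoc X.N, inv_mul_cancel_left₀ X.N0]

theorem tr_main0 (x : F) : tr X.ψ (X.h⁻¹ * (X.j x * X.w)) = X.j (tr c x) := by
  rw [hxw, Pj]
  simp only [sub_mul, add_mul, tr_sub, tr_add, mul_assoc]
  rw [tr_mul_left _ _ _ (X.ψj _), tr_mul_left _ _ _ (X.ψj _), tr_mul_left _ _ _ (X.ψj _),
    tr_mul_left _ _ _ (X.ψj _), trQ, tryQ, try2Q, try3Q]
  simp only [tr, map_add]
  noncomm_ring

theorem tr_main (x : F) : tr X.ct (X.j x * X.w * X.h⁻¹) = X.j (tr c x) := by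
  rw [tr_ct, tr_main0, (X.fix_h _ (tr_fix c X.hc4 x)).eq, mul_assoc, mul_inv_cancel₀ X.h0, mul_one]

theorem Y3 (x : F) : X.y⁻¹ ^ 3 * X.j (c (c (c x))) = X.j x * X.y⁻¹ ^ 3 := by
  have h3 : X.y ^ 3 * X.j x = X.j (c (c (c x))) * X.y ^ 3 := by
    rw [pow_succ', pow_two, mul_assoc, mul_assoc, X.hy, ← mul_assoc X.y (X.j _), X.hy, mul_assoc,
      ← mul_assoc X.y (X.j _), X.hy]
    simp only [mul_assoc]
  have hy3 : X.y ^ 3 ≠ 0 := pow_ne_zero _ X.y0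
  rw [inv_pow, inv_mul_eq_iff_eq_mul₀ hy3, ← mul_assoc, h3, mul_assoc, mul_inv_cancel₀ hy3, mul_one]

/-- the conjugated coefficients slide through the weight -/
theorem Rw (r : F) : (X.h⁻¹ * X.j r * X.h) * X.w = X.w * X.j (c (c (c r))) := by
  have hwe : X.w = X.h⁻¹ * (X.N ^ 2 * X.y⁻¹ ^ 3) := by
    rw [← X.hw, inv_mul_cancel_left₀ X.h0]
  have hN : Commute (X.N ^ 2) (X.j r) := (X.Nj r).pow_left 2
  rw [mul_assoc, X.hw, hwe, mul_assoc X.h⁻¹, mul_assoc X.h⁻¹, mul_assoc (X.N ^ 2), Y3,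
    ← mul_assoc (X.N ^ 2), hN.eq, mul_assoc (X.j r)]

end Ext
end Next


theorem stage_next (s : Stage) : ∃ (s' : Stage) (j : s.F →+* s'.F), j s.f = s'.f ∧
    (∀ g, s.c g = g → s'.c (j g) = j g) ∧
    (∀ x : s.F, ∃ a b : s'.F, s'.c a = a ∧ s'.c b = b ∧ j x = a + s'.f * b) ∧
    (∀ d : s.F, ∃ t : s'.F, s'.InL 1 t ∧ s'.InL 1 (s'.f * t) ∧
      s'.InL 1 (s'.f ^ 2 * t - s'.f * j d)) := by
  let ce : s.F ≃+* s.F := RingEquiv.ofRingHom s.c (s.c.comp (s.c.comp s.c))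
    (by ext x; exact s.hc4 x) (by ext x; exact s.hc4 x)
  obtain ⟨E, _, j, y, ψ, y0, y4, hy, ψj, ψy, ψ4⟩ := skew_exists ce s.h5
  have h5E : (5 : E) = 0 := by
    have h := congrArg j s.h5
    rwa [map_ofNat, map_zero] at h
  let X : Ext s.F s.c E := ⟨j, y, ψ, h5E, s.hc4, y0, y4, hy, ψj, ψy, ψ4⟩
  have trT : ∀ (x : s.F) (l : ℕ), tr X.ct (j x * (j (s.κ l) * X.w * X.h⁻¹)) = j (s.T l x) := by
    intro x l
    have := X.tr_main (x * s.κ l)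
    rw [show X.j = j from rfl, map_mul] at this
    simp only [mul_assoc] at this ⊢
    exact this
  let s' : Stage :=
    { F := E
      h5 := h5E
      c := X.ct
      hc4 := X.ct_four
      f := j s.f
      κ := fun l => j (s.κ l) * X.w * X.h⁻¹
      hκ := by
        intro i hi l hl
        rw [← map_pow, trT, s.T_pow i l hi hl]
        split_ifs <;> simp }
  have hT' : ∀ (x : s.F) (l : ℕ), s'.T l (j x) = j (s.T l x) := trT
  have hfix : ∀ g, s.c g = g → s'.c (j g) = j g := fun g hg => X.ct_fix g hg
  have h0 := X.h0
  have hm : ∀ x : s.F, X.h * j x = j x + j (s.c x) * y := by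
    intro x
    change (1 + y) * j x = _
    rw [add_mul, one_mul, hy]; rfl
  have hm2 : ∀ x : s.F, j x * X.h = j x + j x * y := by
    intro x
    change j x * (1 + y) = _
    rw [mul_add, mul_one]
  refine ⟨s', j, rfl, hfix, ?_, ?_⟩
  · intro x
    have hf : s.f - s.c s.f ≠ 0 := by
      intro h
      have h1 := s.T_smul 1 s.f 1 (sub_eq_zero.1 h).symm
      have h2 := s.T_pow 0 1 (by norm_num) (by norm_num)
      have h3 := s.T_pow 1 1 (by norm_num) (by norm_num)
      simp at h2 h3
      rw [mul_one, h3, h2, mul_zero] at h1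
      exact one_ne_zero h1
    set v := (s.f - s.c s.f)⁻¹ * (x - s.c x) with hv
    set b := s.c (s.c (s.c v)) with hb
    have hcb : s.c b = v := s.hc4 v
    set a := x - s.f * b with ha
    refine ⟨X.h * j a * X.h⁻¹, X.h * j b * X.h⁻¹, X.ct_hj a, X.ct_hj b, ?_⟩
    have key : j x * X.h = X.h * j a + j s.f * (X.h * j b) := by
      rw [hm2, hm, hm, mul_add, ← mul_assoc, ← map_mul, ← map_mul, add_add_add_comm, ← map_add,
        ← add_mul, ← map_add]
      have e1 : a + s.f * b = x := by rw [ha]; abel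
      have e2 : s.c a + s.f * s.c b = x := by
        have e3 : (s.f - s.c s.f) * v = x - s.c x := by rw [hv, mul_inv_cancel_left₀ hf]
        rw [ha, map_sub, map_mul, hcb]
        have e4 : s.c x - s.c s.f * v + s.f * v = s.c x + (s.f - s.c s.f) * v := by noncomm_ring
        rw [e4, e3]; abel
      rw [e1, e2]
    change j x = X.h * j a * X.h⁻¹ + j s.f * (X.h * j b * X.h⁻¹)
    have e5 : j x = (j x * X.h) * X.h⁻¹ := by rw [mul_assoc, mul_inv_cancel₀ h0, mul_one]
    rw [e5, key]
    noncomm_ring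
  · intro d
    set q2 := s.T 2 (s.f * d) with hq2
    set q3 := s.T 3 (s.f * d) with hq3
    have hq2f : s.c q2 = q2 := s.T_fix _ _
    have hq3f : s.c q3 = q3 := s.T_fix _ _
    have hk3 := s.kap_ne 3 (by norm_num)
    set φ := (s.κ 3)⁻¹ * s.κ 2 with hφ
    have hkφ : s.κ 3 * φ = s.κ 2 := by rw [hφ, mul_inv_cancel_left₀ hk3]
    have hφ0 : φ - s.c φ ≠ 0 := by
      intro h
      have h1 := s.hκ 2 (by norm_num) 2 (by norm_num)
      have h2 := s.hκ 2 (by norm_num) 3 (by norm_num)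
      rw [← hkφ, ← mul_assoc, tr_mul_right _ _ _ (sub_eq_zero.1 h).symm, h2] at h1
      simp at h1
    set Z := φ * q3 * φ - φ * q2 with hZ
    set r3 := (s.c Z - Z) * (φ - s.c φ)⁻¹ with hr3
    set r2 := Z + r3 * φ with hr2
    have hr3' : r3 * (φ - s.c φ) = s.c Z - Z := by
      rw [hr3, mul_assoc, inv_mul_cancel₀ hφ0, mul_one]
    have hhZ : X.h * j Z = j r2 * X.h - j r3 * X.h * j φ := by
      rw [mul_assoc, hm, hm, hm2, mul_add, ← mul_assoc, ← map_mul, ← map_mul,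
        add_sub_add_comm, ← sub_mul, ← map_sub, ← map_sub]
      have e1 : r2 - r3 * φ = Z := by rw [hr2]; abel
      have e2 : r2 - r3 * s.c φ = s.c Z := by
        have e3 : r2 - r3 * s.c φ = Z + r3 * (φ - s.c φ) := by rw [hr2]; noncomm_ring
        rw [e3, hr3']; abel
      rw [e1, e2]
    set R2 := X.h⁻¹ * j r2 * X.h with hR2
    set R3 := X.h⁻¹ * j r3 * X.h with hR3
    have hZR : j Z = R2 - R3 * j φ := by
      have e1 : j Z = X.h⁻¹ * (X.h * j Z) := by rw [inv_mul_cancel_left₀ h0]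
      rw [e1, hhZ, hR2, hR3]; noncomm_ring
    have hjk3 : j (s.κ 3) ≠ 0 := by simpa using hk3
    set t := (j (s.κ 2) * j q3 + j (s.κ 3) * R3) * (j (s.κ 3))⁻¹ with ht
    have ht3 : t * j (s.κ 3) = j (s.κ 2) * j q3 + j (s.κ 3) * R3 := by
      rw [ht, mul_assoc, inv_mul_cancel₀ hjk3, mul_one]
    have ht2 : t * j (s.κ 2) = j (s.κ 2) * j q2 + j (s.κ 3) * R2 := by
      have e1 : j (s.κ 2) = j (s.κ 3) * j φ := by rw [← map_mul, hkφ]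
      have e2 : R2 = j Z + R3 * j φ := by rw [hZR]; abel
      nth_rewrite 1 [e1]
      rw [← mul_assoc, ht3, e2, hZ, e1]
      simp only [map_sub, map_mul]
      noncomm_ring
    have gen : ∀ (q r : s.F) (l : ℕ), s.c q = q →
        t * j (s.κ l) = j (s.κ 2) * j q + j (s.κ 3) * (X.h⁻¹ * j r * X.h) →
        ∀ i < 4, s'.T l (s'.f ^ i * t) = (if i = 2 then 1 else 0) * j q
          + (if i = 3 then 1 else 0) * (X.h * j (s.c (s.c (s.c r))) * X.h⁻¹) := by
      intro q r l hq htl i hi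
      have e0 : t * s'.κ l = s'.κ 2 * j q
          + s'.κ 3 * (X.h * j (s.c (s.c (s.c r))) * X.h⁻¹) := by
        change t * (j (s.κ l) * X.w * X.h⁻¹) = j (s.κ 2) * X.w * X.h⁻¹ * j q
          + j (s.κ 3) * X.w * X.h⁻¹ * (X.h * j (s.c (s.c (s.c r))) * X.h⁻¹)
        have c1 : X.h⁻¹ * j q = j q * X.h⁻¹ := (X.fix_h q hq).inv_left₀.eq
        have c2 : X.w * j q = j q * X.w := (X.fix_w q hq).eq
        have c3 : X.h⁻¹ * j r * X.h * X.w = X.w * j (s.c (s.c (s.c r))) := X.Rw r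
        have e1 : t * (j (s.κ l) * X.w * X.h⁻¹) = (t * j (s.κ l)) * X.w * X.h⁻¹ := by
          noncomm_ring
        rw [e1, htl, add_mul, add_mul, mul_assoc (j (s.κ 3)) _ X.w, c3, mul_assoc _ X.h⁻¹ (j q), c1,
          mul_assoc _ X.h⁻¹, mul_assoc X.h, inv_mul_cancel_left₀ h0, ← mul_assoc _ (j q) X.h⁻¹,
          mul_assoc _ X.w (j q), c2]
        simp only [mul_assoc]
      have e2 : s'.T l (s'.f ^ i * t) = tr s'.c (s'.f ^ i * s'.κ 2 * j q
          + s'.f ^ i * s'.κ 3 * (X.h * j (s.c (s.c (s.c r))) * X.h⁻¹)) := by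
        rw [Stage.T, mul_assoc, e0, mul_add, mul_assoc (s'.f ^ i) (s'.κ 2),
          mul_assoc (s'.f ^ i) (s'.κ 3)]
      rw [e2, tr_add, tr_mul_right _ _ _ (hfix q hq), tr_mul_right _ _ _ (X.ct_hj _),
        s'.hκ i hi 2 (by norm_num), s'.hκ i hi 3 (by norm_num)]
    have g2 := gen q2 r2 2 hq2f ht2
    have g3 := gen q3 r3 3 hq3f ht3
    have hfd : s'.f * j d = j (s.f * d) := (map_mul j _ _).symm
    refine ⟨t, s'.inL1 _ ?_ ?_, s'.inL1 _ ?_ ?_, s'.inL1 _ ?_ ?_⟩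
    · simpa using g2 0 (by norm_num)
    · simpa using g3 0 (by norm_num)
    · simpa using g2 1 (by norm_num)
    · simpa using g3 1 (by norm_num)
    · rw [Stage.T_sub, g2 2 (by norm_num), hfd, hT', ← hq2]; simp
    · rw [Stage.T_sub, g3 2 (by norm_num), hfd, hT', ← hq3]; simp

theorem stage_init : Nonempty Stage := by
  have h50 : (5 : ZMod 5) = 0 := by decide
  have : Fact (Nat.Prime 5) := ⟨by norm_num⟩
  obtain ⟨E, _, j, y, ψ, y0, y4, hy, ψj, ψy, ψ4⟩ :=
    skew_exists (RingEquiv.refl (ZMod 5)) h50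
  have h5E : (5 : E) = 0 := by
    have h := congrArg j h50
    rwa [map_ofNat, map_zero] at h
  let X : Ext (ZMod 5) (RingHom.id _) E := ⟨j, y, ψ, h5E, fun _ => rfl, y0, y4, hy, ψj, ψy, ψ4⟩
  refine ⟨{ F := E, h5 := h5E, c := ψ, hc4 := ψ4, f := y, κ := fun l => - y⁻¹ ^ l, hκ := ?_ }⟩
  intro i hi l hl
  have e1 : tr ψ 1 = -1 := X.tr_one
  have e2 : tr ψ y = 0 := X.tr_y
  have e3 : tr ψ (y ^ 2) = 0 := X.tr_y2
  have e4 : tr ψ (y ^ 3) = 0 := X.tr_y3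
  have e5 : tr ψ (y⁻¹) = 0 := X.tr_Y
  have e6 : tr ψ (y⁻¹ ^ 2) = 0 := X.tr_Y2
  have e7 : tr ψ (y⁻¹ ^ 3) = 0 := X.tr_Y3
  have e8 : ∀ v, tr ψ (-v) = - tr ψ v := by
    intro v; simp only [tr, map_neg]; abel
  rw [mul_neg, e8]
  have e9 : ∀ n : ℕ, y ^ n * y⁻¹ ^ n = 1 := by
    intro n
    rw [inv_pow, mul_inv_cancel₀ (pow_ne_zero _ y0)]
  rcases lt_trichotomy i l with h | h | h
  · obtain ⟨k, rfl⟩ := Nat.exists_eq_add_of_lt h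
    rw [if_neg (by omega), add_assoc, pow_add y⁻¹, ← mul_assoc, e9, one_mul]
    have hk : k < 3 := by omega
    interval_cases k
    · rw [zero_add, pow_one, e5, neg_zero]
    · rw [e6, neg_zero]
    · rw [e7, neg_zero]
  · rw [if_pos h, h, e9, e1, neg_neg]
  · obtain ⟨k, rfl⟩ := Nat.exists_eq_add_of_lt h
    rw [if_neg (by omega), add_assoc, add_comm l, pow_add y, mul_assoc, e9, mul_one]
    have hk : k < 3 := by omega
    interval_cases k
    · rw [zero_add, pow_one, e2, neg_zero]
    · rw [e3, neg_zero]
    · rw [e4, neg_zero]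


section Limit
variable (A : ℕ → Type) [∀ n, DivisionRing (A n)] (p : ∀ n, A n →+* A (n + 1))

/-- transition maps -/
def trans (m n : ℕ) (h : m ≤ n) : A m →+* A n :=
  Nat.leRec (motive := fun n _ => A m →+* A n) (RingHom.id _) (fun k _ g => (p k).comp g) h

theorem trans_self (m : ℕ) (h : m ≤ m) : trans A p m m h = RingHom.id _ :=
  Nat.leRec_self _ _

theorem trans_succ (m n : ℕ) (h : m ≤ n) (h2 : m ≤ n + 1) :
    trans A p m (n + 1) h2 = (p n).comp (trans A p m n h) :=
  Nat.leRec_succ _ _ _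

instance trans_sys : DirectedSystem A (fun i k h => trans A p i k h) where
  map_self i x := by rw [trans_self]; rfl
  map_map k j i hij hjk x := by
    induction k, hjk using Nat.le_induction with
    | base => rw [trans_self]; rfl
    | succ k hk ih =>
      rw [trans_succ A p j k hk, trans_succ A p i k (hij.trans hk), RingHom.comp_apply,
        RingHom.comp_apply, ih]

theorem limit_exists : ∃ (L : Type) (_ : DivisionRing L) (ι : ∀ n, A n →+* L),
    (∀ n x, ι (n + 1) (p n x) = ι n x) ∧ ∀ x, ∃ n a, x = ι n a := by
  let ι : ∀ n, A n →+* DirectLimit A (trans A p) := fun n =>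
    { toFun := fun x => ⟦⟨n, x⟩⟧
      map_one' := (DirectLimit.one_def n).symm
      map_zero' := (DirectLimit.zero_def n).symm
      map_mul' := fun x y => (DirectLimit.mul_def n x y).symm
      map_add' := fun x y => (DirectLimit.add_def n x y).symm }
  refine ⟨DirectLimit A (trans A p), inferInstance, ι, ?_, ?_⟩
  · intro n x
    have h := DirectLimit.mk_apply (f := trans A p) n (n + 1) x (Nat.le_succ n)
    rw [trans_succ A p n n le_rfl, trans_self] at h
    exact h
  · intro x
    exact DirectLimit.exists_eq_mk _ x

end Limit

section LS
variable {F : Type} [DivisionRing F] (G : Subring F) (f : ℕ → F)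

theorem L_zero (k : ℕ) : (0 : F) ∈ Lset G f k := ⟨fun _ => 0, fun _ => G.zero_mem, by simp⟩

theorem L_add {k : ℕ} {x y : F} (hx : x ∈ Lset G f k) (hy : y ∈ Lset G f k) :
    x + y ∈ Lset G f k := by
  obtain ⟨a, ha, rfl⟩ := hx
  obtain ⟨b, hb, rfl⟩ := hy
  exact ⟨fun i => a i + b i, fun i => G.add_mem (ha i) (hb i), by
    simp only [add_mul, Finset.sum_add_distrib]⟩

theorem L_smul {k : ℕ} {g x : F} (hg : g ∈ G) (hx : x ∈ Lset G f k) :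
    g * x ∈ Lset G f k := by
  obtain ⟨a, ha, rfl⟩ := hx
  exact ⟨fun i => g * a i, fun i => G.mul_mem hg (ha i), by
    simp only [Finset.mul_sum, mul_assoc]⟩

theorem L_sub {k : ℕ} {x y : F} (hx : x ∈ Lset G f k) (hy : y ∈ Lset G f k) :
    x - y ∈ Lset G f k := by
  have h := L_add G f hx (L_smul G f (G.neg_mem G.one_mem) hy)
  rwa [neg_one_mul, ← sub_eq_add_neg] at h

theorem L_basis {k i : ℕ} (hi : i ≤ k) : f i ∈ Lset G f k := by
  refine ⟨fun m => if m = i then 1 else 0, fun m => ?_, ?_⟩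
  · dsimp only
    split_ifs
    · exact G.one_mem
    · exact G.zero_mem
  · rw [Finset.sum_eq_single i]
    · simp
    · intro b _ hb; simp [hb]
    · intro h; exact absurd (Finset.mem_range.2 (by omega)) h

theorem L_mul {k m : ℕ} {a : F} (h : ∀ i ≤ k, f i * a ∈ Lset G f m) :
    ∀ x ∈ Lset G f k, x * a ∈ Lset G f m := by
  rintro x ⟨c, hc, rfl⟩
  rw [Finset.sum_mul]
  have key : ∀ n ≤ k + 1, ∑ i ∈ Finset.range n, c i * f i * a ∈ Lset G f m := by
    intro n
    induction n with
    | zero => intro _; simpa using L_zero G f m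
    | succ n ih =>
      intro hn
      rw [Finset.sum_range_succ, mul_assoc]
      exact L_add G f (ih (by omega)) (L_smul G f (hc n) (h n (by omega)))
  exact key _ le_rfl

end LS

end S8

open S8

/-- There is a division ring extension `G ⊆ F` with a left `G`-basis `f_0 = 1, f_1, f_2, f_3`
of `F` such that every `x ∈ F` has the form `a + f_1·b` with `a, b ∈ G`, and for
`k ∈ {1, 2}` there is `e ∈ D_k \ S_k` with `D_k = S_k + e·S_k` (i.e. the right dimension
sequence of `F` is `(1,2,2,2,1,4)`; the associated triangular ring has Coxeter type `I₂(6)`). -/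
theorem stmt8 :
    ∃ E : DivExtData,
      (∀ x : E.F, ∃ c : ℕ → E.F, (∀ i, c i ∈ E.G) ∧
        x = ∑ i ∈ Finset.range 4, c i * E.f i) ∧
      (∀ c : ℕ → E.F, (∀ i, c i ∈ E.G) →
        ∑ i ∈ Finset.range 4, c i * E.f i = 0 → ∀ i < 4, c i = 0) ∧
      (∀ x : E.F, ∃ a ∈ E.G, ∃ b ∈ E.G, x = a + E.f 1 * b) ∧
      (∀ k : ℕ, k = 1 ∨ k = 2 → ∃ e ∈ Dset E.G E.f k, e ∉ Sset E.G E.f k ∧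
        ∀ d ∈ Dset E.G E.f k, ∃ s ∈ Sset E.G E.f k, ∃ t ∈ Sset E.G E.f k,
          d = s + e * t) := by
  choose nx jn hjf hjG hP3 hP4 using stage_next
  obtain ⟨s0⟩ := stage_init
  let sq : ℕ → Stage := fun n => Nat.rec (motive := fun _ => Stage) s0 (fun _ s => nx s) n
  have hlim : ∃ (L : Type) (_ : DivisionRing L) (ι : ∀ n, (sq n).F →+* L),
      (∀ n x, ι (n + 1) (jn (sq n) x) = ι n x) ∧ ∀ x, ∃ n a, x = ι n a :=
    @limit_exists (fun n => (sq n).F) (fun n => (sq n).inst) (fun n => jn (sq n))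
  obtain ⟨L, _, ι, hι, hsur⟩ := hlim
  have hf : ∀ n, ι n (sq n).f = ι 0 (sq 0).f := by
    intro n
    induction n with
    | zero => rfl
    | succ n ih =>
      rw [← ih, ← hι n]
      congr 1
      exact (hjf (sq n)).symm
  have up : ∀ n m, n ≤ m → ∀ g : (sq n).F, (sq n).c g = g →
      ∃ g' : (sq m).F, (sq m).c g' = g' ∧ ι n g = ι m g' := by
    intro n m h g hg
    induction m, h using Nat.le_induction with
    | base => exact ⟨g, hg, rfl⟩
    | succ m hm ih =>
      obtain ⟨g', h1, h2⟩ := ih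
      exact ⟨jn (sq m) g', hjG (sq m) g' h1, by rw [h2]; exact (hι m g').symm⟩
  have hz : ∀ n, (sq n).c 0 = 0 := fun n => map_zero _
  let G : Subring L :=
    { carrier := {x | ∃ n, ∃ g : (sq n).F, (sq n).c g = g ∧ x = ι n g}
      zero_mem' := ⟨0, 0, map_zero _, (map_zero _).symm⟩
      one_mem' := ⟨0, 1, map_one _, (map_one _).symm⟩
      neg_mem' := by
        rintro _ ⟨n, g, hg, rfl⟩
        exact ⟨n, -g, by rw [map_neg, hg], (map_neg _ _).symm⟩
      add_mem' := by
        rintro _ _ ⟨n, g, hg, rfl⟩ ⟨m, k, hk, rfl⟩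
        obtain ⟨g', hg1, hg2⟩ := up n (max n m) (le_max_left _ _) g hg
        obtain ⟨k', hk1, hk2⟩ := up m (max n m) (le_max_right _ _) k hk
        exact ⟨max n m, g' + k', by rw [map_add, hg1, hk1], by rw [map_add, hg2, hk2]⟩
      mul_mem' := by
        rintro _ _ ⟨n, g, hg, rfl⟩ ⟨m, k, hk, rfl⟩
        obtain ⟨g', hg1, hg2⟩ := up n (max n m) (le_max_left _ _) g hg
        obtain ⟨k', hk1, hk2⟩ := up m (max n m) (le_max_right _ _) k hk
        exact ⟨max n m, g' * k', by rw [map_mul, hg1, hk1], by rw [map_mul, hg2, hk2]⟩ }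
  have hGm : ∀ n (g : (sq n).F), (sq n).c g = g → ι n g ∈ G := fun n g hg => ⟨n, g, hg, rfl⟩
  set φ := ι 0 (sq 0).f with hφ
  have hInL : ∀ n k x, (sq n).InL k x → ι n x ∈ Lset G (fun i => φ ^ i) k := by
    rintro n k _ ⟨g, hg, rfl⟩
    refine ⟨fun i => ι n (g i), fun i => hGm n _ (hg i), ?_⟩
    simp only [map_sum, map_mul, map_pow, hf]
  have hind : ∀ c : ℕ → L, (∀ i, c i ∈ G) →
        ∑ i ∈ Finset.range 4, c i * φ ^ i = 0 → ∀ i < 4, c i = 0 := by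
    intro c hc hs
    choose n g hg hcg using hc
    let N := n 0 + n 1 + n 2 + n 3
    have hN : ∀ i, ∃ g' : (sq N).F, (sq N).c g' = g' ∧ (i < 4 → c i = ι N g') := by
      intro i
      by_cases hi : i < 4
      · have hn : n i ≤ N := by
          interval_cases i <;> simp only [N] <;> omega
        obtain ⟨g', h1, h2⟩ := up (n i) N hn (g i) (hg i)
        exact ⟨g', h1, fun _ => by rw [hcg i, h2]⟩
      · exact ⟨0, map_zero _, fun h => absurd h hi⟩
    choose g' h1 h2 using hN
    have h3 : ι N (∑ i ∈ Finset.range 4, g' i * (sq N).f ^ i) = 0 := by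
      rw [← hs, map_sum]
      refine Finset.sum_congr rfl fun i hi => ?_
      rw [map_mul, map_pow, hf, h2 i (Finset.mem_range.1 hi)]
    have h4 : ∑ i ∈ Finset.range 4, g' i * (sq N).f ^ i = 0 := by
      exact (map_eq_zero_iff (ι N) (ι N).injective).1 h3
    intro i hi
    rw [h2 i hi, (sq N).indep g' h1 h4 i hi, map_zero]
  have hnot : ∀ k, k < 3 → φ ^ (k + 1) ∉ Lset G (fun i => φ ^ i) k := by
    rintro k hk ⟨c, hc, he⟩
    have h1 := hind (fun i => if i < k + 1 then c i else if i = k + 1 then -1 else 0) (fun i => by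
      split_ifs
      · exact hc i
      · exact G.neg_mem G.one_mem
      · exact G.zero_mem) (by
      interval_cases k <;> simp [Finset.sum_range_succ] at he ⊢ <;> rw [he] <;> abel)
      (k + 1) (by omega)
    simp at h1
  refine ⟨{ F := L, G := G, hG := ?_, f := fun i => φ ^ i, hf0 := pow_zero _ }, ?_, ?_, ?_, ?_⟩
  · rintro _ ⟨n, g, hg, rfl⟩
    exact ⟨n, g⁻¹, by rw [map_inv₀, hg], (map_inv₀ _ _).symm⟩
  · intro x
    obtain ⟨n, a, rfl⟩ := hsur x
    refine ⟨fun i => ι n ((sq n).T i a), fun i => hGm n _ ((sq n).T_fix i a), ?_⟩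
    conv_lhs => rw [(sq n).span a]
    simp only [map_sum, map_mul, map_pow, hf]
  · exact hind
  · intro x
    obtain ⟨n, a, rfl⟩ := hsur x
    obtain ⟨u, v, hu, hv, he⟩ := hP3 (sq n) a
    refine ⟨ι (n + 1) u, hGm (n + 1) u hu, ι (n + 1) v, hGm (n + 1) v hv, ?_⟩
    rw [← hι n, he]
    change _ = _ + φ ^ 1 * _
    rw [pow_one, ← hf (n + 1)]
    exact (map_add (ι (n + 1)) u (_ * v)).trans (by rw [map_mul])
  · have hb : ∀ {k i : ℕ}, i ≤ k → φ ^ i ∈ Lset G (fun i => φ ^ i) k :=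
      fun h => L_basis G (fun i => φ ^ i) h
    rintro k (rfl | rfl)
    · refine ⟨φ, ?_, ?_, ?_⟩
      · refine L_mul G _ fun i hi => ?_
        rw [← pow_succ]
        exact hb (by omega)
      · intro h
        apply hnot 1 (by norm_num)
        rw [pow_succ]
        exact h _ (hb le_rfl)
      · intro d hd
        have hd1 : d ∈ Lset G (fun i => φ ^ i) 1 := by
          have h := hd (φ ^ 0) (hb le_rfl)
          rwa [pow_zero, one_mul] at h
        obtain ⟨n, a, rfl⟩ := hsur d
        obtain ⟨t, h1, h2, h3⟩ := hP4 (sq n) a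
        replace h1 := hInL (n + 1) 1 _ h1
        replace h2 := hInL (n + 1) 1 _ h2
        replace h3 := hInL (n + 1) 1 _ h3
        have hfn : ι (n + 1) (nx (sq n)).f = φ := hf (n + 1)
        have hja : ι (n + 1) (jn (sq n) a) = ι n a := hι n a
        have k2 : φ * ι (n + 1) t ∈ Lset G (fun i => φ ^ i) 1 := by
          have h := h2
          rwa [map_mul, hfn] at h
        have k3 : φ ^ 2 * ι (n + 1) t - φ * ι n a ∈ Lset G (fun i => φ ^ i) 1 := by
          have h := h3
          rwa [map_sub, map_mul, map_mul, map_pow, hfn, hja] at h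
        refine ⟨ι n a - φ * ι (n + 1) t, ?_, ι (n + 1) t, ?_, by rw [sub_add_cancel]⟩
        · refine L_mul G _ fun i hi => ?_
          change φ ^ i * _ ∈ Lset G (fun i => φ ^ i) _
          interval_cases i
          · rw [pow_zero, one_mul]
            exact L_sub G _ hd1 k2
          · have h := L_sub G _ (L_zero G _ 1) k3
            rw [pow_one]
            convert h using 1
            noncomm_ring
        · refine L_mul G _ fun i hi => ?_
          change φ ^ i * _ ∈ Lset G (fun i => φ ^ i) _
          interval_cases i
          · rw [pow_zero, one_mul]; exact h1
          · rw [pow_one]; exact k2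
    · refine ⟨φ, ?_, ?_, ?_⟩
      · refine L_mul G _ fun i hi => ?_
        rw [← pow_succ]
        exact hb (by omega)
      · intro h
        apply hnot 2 (by norm_num)
        rw [pow_succ]
        exact h _ (hb le_rfl)
      · intro d hd
        have hd1 : d ∈ Lset G (fun i => φ ^ i) 2 := by
          have h := hd (φ ^ 0) (hb (by norm_num))
          rwa [pow_zero, one_mul] at h
        have hd2 : φ * d ∈ Lset G (fun i => φ ^ i) 2 := by
          have h := hd (φ ^ 1) (hb le_rfl)
          rwa [pow_one] at h
        obtain ⟨n, a, rfl⟩ := hsur d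
        obtain ⟨t, h1, h2, h3, h4⟩ := (sq n).P5 a
        replace h1 := hInL n 2 _ h1
        replace h2 := hInL n 2 _ h2
        replace h3 := hInL n 2 _ h3
        replace h4 := hInL n 2 _ h4
        simp only [map_sub, map_mul, map_pow, hf] at h2 h3 h4
        refine ⟨ι n a - φ * ι n t, ?_, ι n t, ?_, by rw [sub_add_cancel]⟩
        · refine L_mul G _ fun i hi => ?_
          change φ ^ i * _ ∈ Lset G (fun i => φ ^ i) _
          interval_cases i
          · rw [pow_zero, one_mul]
            exact L_sub G _ hd1 h2
          · have h := L_sub G _ hd2 h3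
            rw [pow_one]
            convert h using 1
            noncomm_ring
          · have h := L_sub G _ (L_zero G _ 2) h4
            convert h using 1
            noncomm_ring
        · refine L_mul G _ fun i hi => ?_
          change φ ^ i * _ ∈ Lset G (fun i => φ ^ i) _
          interval_cases i
          · rw [pow_zero, one_mul]; exact h1
          · rw [pow_one]; exact h2
          · exact h3
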